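/- Let X ∈ ES. For every X-regular blueprint π and every X-satisfiable elementary conjunction γ, there is a pointed X-model (M, s₀) realizing π and γ. -/

import Mathlib

namespace CL

/-- The language Φ of coalition logic over a set of agents, with atomic
propositions drawn from ℕ (a countable set). -/
inductive Formula (Agent : Type) : Type
  | top : Formula Agent
  | atom : ℕ → Formula Agent
  | neg : Formula Agent → Formula Agent
  | and : Formula Agent → Formula Agent → Formula Agent
  | coal : Set Agent → Formula Agent → Formula Agent

namespace Formula

variable {Agent : Type}

def bot : Formula Agent := neg top

def or (φ ψ : Formula Agent) : Formula Agent := neg (and (neg φ) (neg ψ))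

def imp (φ ψ : Formula Agent) : Formula Agent := or (neg φ) ψ

def iff (φ ψ : Formula Agent) : Formula Agent := and (imp φ ψ) (imp ψ φ)

end Formula

/-- The three frame properties: seriality, independence of agents, determinism.
`ES` is represented by `Set P3`, the eight subsets of {S, I, D}. -/
inductive P3 : Type
  | S | I | D
deriving DecidableEq
section
open Classical

/-- Merge of two joint actions of disjoint coalitions. -/
noncomputable def jaUnion {Agent Act : Type} {C D : Set Agent}
    (σC : C → Act) (σD : D → Act) : ↥(C ∪ D) → Act :=
  fun a =>
    if h : a.1 ∈ C then σC ⟨a.1, h⟩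
    else σD ⟨a.1, ((Set.mem_union _ _ _).mp a.2).resolve_left h⟩

end

/-- A general concurrent game frame: a nonempty set of states, a nonempty set
of actions, and an outcome function for the grand coalition.  Joint actions of
a coalition C are functions C → Act; action profiles are functions Agent → Act. -/
structure Frame (Agent : Type) where
  State : Type
  state_nonempty : Nonempty State
  Act : Type
  act_nonempty : Nonempty Act
  out : State → (Agent → Act) → Set State

namespace Frame

variable {Agent : Type} (F : Frame Agent)

/-- Outcome function for a coalition C. -/
def outC (C : Set Agent) (s : F.State) (σ : C → F.Act) : Set F.State :=
  ⋃ (τ : Agent → F.Act) (_ : ∀ a : C, τ a.1 = σ a), F.out s τ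

/-- Availability function: the available joint actions of C at s. -/
def aja (C : Set Agent) (s : F.State) : Set (C → F.Act) :=
  {σ | (F.outC C s σ).Nonempty}

def Serial : Prop := ∀ (s : F.State) (C : Set Agent), (F.aja C s).Nonempty

def Independent : Prop :=
  ∀ (s : F.State) (C D : Set Agent), C ∩ D = ∅ →
    ∀ σC ∈ F.aja C s, ∀ σD ∈ F.aja D s, jaUnion σC σD ∈ F.aja (C ∪ D) s

def Deterministic : Prop :=
  ∀ s : F.State, ∀ σ ∈ F.aja Set.univ s, ∃ t : F.State, F.outC Set.univ s σ = {t}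

end Frame

/-- A general concurrent game model: a frame together with a labeling function
(atomic propositions are drawn from the countable set ℕ). -/
structure Model (Agent : Type) extends Frame Agent where
  lab : State → Set ℕ

namespace Model

variable {Agent : Type} (M : Model Agent)

/-- Satisfaction: M, s ⊨ φ. -/
def sat : Formula Agent → M.State → Prop
  | .top, _ => True
  | .atom n, s => n ∈ M.lab s
  | .neg φ, s => ¬ sat φ s
  | .and φ ψ, s => sat φ s ∧ sat ψ s
  | .coal C φ, s => ∃ σ ∈ M.toFrame.aja C s, ∀ t ∈ M.toFrame.outC C s σ, sat φ t

/-- M is an X-model (for X ∈ ES). -/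
def IsX (X : Set P3) : Prop :=
  (P3.S ∈ X → M.toFrame.Serial) ∧ (P3.I ∈ X → M.toFrame.Independent) ∧
    (P3.D ∈ X → M.toFrame.Deterministic)

end Model

/-- φ is X-valid: φ holds at every pointed X-model. -/
def XValid {Agent : Type} (X : Set P3) (φ : Formula Agent) : Prop :=
  ∀ M : Model Agent, M.IsX X → ∀ s : M.State, M.sat φ s

/-- φ is X-satisfiable: φ holds at some pointed X-model. -/
def XSat {Agent : Type} (X : Set P3) (φ : Formula Agent) : Prop :=
  ∃ M : Model Agent, M.IsX X ∧ ∃ s : M.State, M.sat φ s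

/-- φ ⊨_XL ψ : ψ holds at every pointed X-model at which φ holds. -/
def XConseq {Agent : Type} (X : Set P3) (φ ψ : Formula Agent) : Prop :=
  ∀ M : Model Agent, M.IsX X → ∀ s : M.State, M.sat φ s → M.sat ψ s
def bigConj {Agent : Type} (l : List (Formula Agent)) : Formula Agent :=
  l.foldr Formula.and Formula.top

def bigDisj {Agent : Type} (l : List (Formula Agent)) : Formula Agent :=
  l.foldr Formula.or Formula.bot

inductive IsLiteral {Agent : Type} : Formula Agent → Prop
  | pos (n : ℕ) : IsLiteral (Formula.atom n)
  | neg (n : ℕ) : IsLiteral (Formula.neg (Formula.atom n))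

/-- An elementary disjunction: a disjunction of propositional literals. -/
inductive IsElemDisj {Agent : Type} : Formula Agent → Prop
  | lit {φ : Formula Agent} : IsLiteral φ → IsElemDisj φ
  | or {φ ψ : Formula Agent} : IsElemDisj φ → IsElemDisj ψ → IsElemDisj (φ.or ψ)

/-- An elementary conjunction: a conjunction of propositional literals. -/
inductive IsElemConj {Agent : Type} : Formula Agent → Prop
  | lit {φ : Formula Agent} : IsLiteral φ → IsElemConj φ
  | and {φ ψ : Formula Agent} : IsElemConj φ → IsElemConj ψ → IsElemConj (φ.and ψ)

/-- The data of a standard disjunction γ ∨ (⋀_{i∈NI}⟨A_i⟩φ_i → ⋁_{j∈PI}⟨B_j⟩ψ_j):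
NI is represented by `Fin n` (possibly empty) and PI by `Fin (m+1)` (nonempty);
(1) if NI ≠ ∅ then ⟨A_i⟩φ_i = ⟨∅⟩⊤ for some i ∈ NI, and (2) ⟨B_0⟩ψ_0 = ⟨AG⟩⊥. -/
structure StdDisj (Agent : Type) where
  γ : Formula Agent
  hγ : IsElemDisj γ
  n : ℕ
  m : ℕ
  A : Fin n → Set Agent
  φ : Fin n → Formula Agent
  B : Fin (m + 1) → Set Agent
  ψ : Fin (m + 1) → Formula Agent
  hNI : n ≠ 0 → ∃ i : Fin n, A i = ∅ ∧ φ i = Formula.top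
  hB0 : B 0 = Set.univ
  hψ0 : ψ 0 = Formula.bot

namespace StdDisj

variable {Agent : Type} (d : StdDisj Agent)

/-- The formula γ ∨ (⋀_{i∈NI}⟨A_i⟩φ_i → ⋁_{j∈PI}⟨B_j⟩ψ_j). -/
def toFormula : Formula Agent :=
  d.γ.or
    ((bigConj ((List.finRange d.n).map fun i => Formula.coal (d.A i) (d.φ i))).imp
      (bigDisj ((List.finRange (d.m + 1)).map fun j => Formula.coal (d.B j) (d.ψ j))))

/-- N ⊆ NI is X-neat. -/
def Neat (X : Set P3) (N : Finset (Fin d.n)) : Prop :=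
  (∀ i ∈ N, ∀ i' ∈ N, i ≠ i' → d.A i ∩ d.A i' = ∅) ∧
    (P3.S ∉ X → N.Nonempty) ∧
    (P3.I ∉ X → ∀ i ∈ N, ∀ i' ∈ N, d.A i ≠ ∅ → d.A i' ≠ ∅ → i = i')

/-- The set of basic positive indices `PI₀ = { j ∈ PI : B_j = AG }`. -/
noncomputable def PI0 : Finset (Fin (d.m + 1)) :=
  letI := Classical.decPred fun j : Fin (d.m + 1) => d.B j = Set.univ
  Finset.univ.filter fun j => d.B j = Set.univ

end StdDisj

/-- A blueprint π = (AG, AC₀, list_AG): a nonempty action set AC₀ and a listing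
function for the grand coalition (joint actions taken over AC₀). -/
structure Blueprint (Agent : Type) where
  Act : Type
  act_nonempty : Nonempty Act
  listAG : (↥(Set.univ : Set Agent) → Act) → Set (Formula Agent)

namespace Blueprint

variable {Agent : Type} (bp : Blueprint Agent)

/-- The listing function for a coalition C:
list_C(σ_C) = ⋃ { list_AG(σ_AG) : σ_AG ∈ JA_AG, σ_C ⊆ σ_AG }. -/
def listC (C : Set Agent) (σ : C → bp.Act) : Set (Formula Agent) :=
  ⋃ (τ : ↥(Set.univ : Set Agent) → bp.Act)
    (_ : ∀ a : C, τ ⟨a.1, Set.mem_univ a.1⟩ = σ a), bp.listAG τ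

/-- The set of performable joint actions of C. -/
def PJA (C : Set Agent) : Set (C → bp.Act) := {σ | (bp.listC C σ).Nonempty}

/-- The blueprint is X-regular. -/
def Regular (X : Set P3) : Prop :=
  (∀ (C : Set Agent) (σ : C → bp.Act), ∀ χ ∈ bp.listC C σ, XSat X χ) ∧
    (P3.S ∈ X → ∀ C : Set Agent, (bp.PJA C).Nonempty) ∧
    (P3.I ∈ X → ∀ (C D : Set Agent), C ∩ D = ∅ →
      ∀ σC ∈ bp.PJA C, ∀ σD ∈ bp.PJA D, jaUnion σC σD ∈ bp.PJA (C ∪ D)) ∧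
    (P3.D ∈ X → ∀ σ ∈ bp.PJA (Set.univ : Set Agent),
      ∃ χ : Formula Agent, bp.listAG σ = {χ})

/-- The ensuring function A_X: the formulas that are X-logical consequences of
every formula in list_C(σ_C). -/
def ens (X : Set P3) (C : Set Agent) (σ : C → bp.Act) : Set (Formula Agent) :=
  {ψ | ∀ φ ∈ bp.listC C σ, XConseq X φ ψ}

/-- The enabling function E_X: the formulas that are X-logical consequences of
some formula in list_C(σ_C). -/
def ena (X : Set P3) (C : Set Agent) (σ : C → bp.Act) : Set (Formula Agent) :=
  {ψ | ∃ φ ∈ bp.listC C σ, XConseq X φ ψ}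

end Blueprint

/-- (M, s₀) realizes the blueprint bp and the elementary conjunction γ:
there is an embedding ι of bp's actions into M's actions (AC₀ ⊆ AC) such that
(2) aja_C(s₀) = PJA_C for every C ⊆ AG; (3) M, s₀ ⊨ γ; (4) every joint action
σ_C ensures at (M,s₀) every ψ ∈ A_X(σ_C); (5) every joint action σ_C enables
at (M,s₀) every ψ ∈ E_X(σ_C). -/
def Realizes {Agent : Type} (X : Set P3) (bp : Blueprint Agent)
    (γ : Formula Agent) (M : Model Agent) (s₀ : M.State) : Prop :=
  ∃ ι : bp.Act ↪ M.Act,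
    (∀ C : Set Agent,
      M.toFrame.aja C s₀ = (fun σ : C → bp.Act => ⇑ι ∘ σ) '' bp.PJA C) ∧
    M.sat γ s₀ ∧
    (∀ (C : Set Agent) (σ : C → bp.Act), ∀ ψ ∈ bp.ens X C σ,
      ∀ t ∈ M.toFrame.outC C s₀ (⇑ι ∘ σ), M.sat ψ t) ∧
    (∀ (C : Set Agent) (σ : C → bp.Act), ∀ ψ ∈ bp.ena X C σ,
      ∃ t ∈ M.toFrame.outC C s₀ (⇑ι ∘ σ), M.sat ψ t)

/-!
The disjoint union of pointed `X`-models, one for every `X`-satisfiable formula, is a single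
`X`-model `U` with a state `p χ ⊨ χ` for every such `χ`. Add to `U` a root labelled like a state
satisfying `γ`, at which a profile of blueprint actions leads to the states `p χ` with `χ` listed
for that profile. The new actions are kept apart from those of `U`, and a profile mixing the two
has no outcome, hence is unavailable. So the game at each state of `U` is only relabelled, which
affects neither satisfaction nor the properties in `X`, and the game at the root is a relabelling
of the blueprint, which has the properties in `X` by regularity. An outcome `p χ` of a root action
satisfies `χ`, hence all its `X`-consequences.
-/

section

variable {Agent : Type}

theorem comp_jaUnion {A B : Type} {C D : Set Agent} (f : A → B) (σC : C → A) (σD : D → A) :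
    f ∘ jaUnion σC σD = jaUnion (f ∘ σC) (f ∘ σD) := by
  funext a
  simp only [jaUnion, Function.comp_apply, apply_dite f]

/-- A one-shot game: each action profile over `A` has a set of possible outcomes in `W`, empty if
the profile is unavailable. The game played at a state `s` of a frame `F` is `F.out s`. -/
abbrev GameForm (Agent A : Type) (W : Type*) := (Agent → A) → Set W

namespace GameForm

variable {A B : Type} {W V : Type*} (G : GameForm Agent A W)

/-- The possible outcomes of a joint action `σ` of `C`; definitionally `Frame.outC` for the game
played at a state. -/
def outcomes (C : Set Agent) (σ : C → A) : Set W :=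
  ⋃ (τ : Agent → A) (_ : ∀ a : C, τ a.1 = σ a), G τ

/-- The joint actions of `C` having an outcome; definitionally `Frame.aja` for the game played at
a state. -/
def available (C : Set Agent) : Set (C → A) := {σ | (G.outcomes C σ).Nonempty}

/-- The requirements that the frame properties in `X` impose on the game played at one state. -/
structure Obeys (X : Set P3) : Prop where
  serial : P3.S ∈ X → ∀ C : Set Agent, (G.available C).Nonempty
  independent : P3.I ∈ X → ∀ C D : Set Agent, C ∩ D = ∅ →
    ∀ σC ∈ G.available C, ∀ σD ∈ G.available D, jaUnion σC σD ∈ G.available (C ∪ D)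
  deterministic : P3.D ∈ X → ∀ σ ∈ G.available Set.univ, ∃ w, G.outcomes Set.univ σ = {w}

/-- The game `G` with its actions renamed along `ι` and its outcomes along `f`. A profile using an
action outside the range of `ι` has no outcome. -/
def map (ι : A ↪ B) (f : W → V) : GameForm Agent B V :=
  fun τ => ⋃ (ρ : Agent → A) (_ : ι ∘ ρ = τ), f '' G ρ

variable {G} {C : Set Agent}

theorem mem_outcomes {σ : C → A} {w : W} :
    w ∈ G.outcomes C σ ↔ ∃ τ : Agent → A, (∀ a : C, τ a.1 = σ a) ∧ w ∈ G τ := by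
  simp only [outcomes, Set.mem_iUnion, exists_prop]

theorem mem_map {ι : A ↪ B} {f : W → V} {τ : Agent → B} {v : V} :
    v ∈ G.map ι f τ ↔ ∃ ρ : Agent → A, ι ∘ ρ = τ ∧ v ∈ f '' G ρ := by
  simp only [map, Set.mem_iUnion, exists_prop]

theorem outcomes_univ (σ : ↥(Set.univ : Set Agent) → A) :
    G.outcomes Set.univ σ = G fun a => σ ⟨a, Set.mem_univ a⟩ := by
  ext w
  rw [mem_outcomes]
  constructor
  · rintro ⟨τ, hτ, hw⟩
    rwa [← show τ = _ from funext fun a => hτ ⟨a, Set.mem_univ a⟩]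
  · exact fun hw => ⟨_, fun _ => rfl, hw⟩

theorem outcomes_map (ι : A ↪ B) (f : W → V) (σ : C → A) :
    (G.map ι f).outcomes C (ι ∘ σ) = f '' G.outcomes C σ := by
  ext v
  simp only [mem_outcomes, mem_map]
  constructor
  · rintro ⟨_, hτ, ρ, rfl, w, hw, rfl⟩
    exact ⟨w, mem_outcomes.2 ⟨ρ, fun a => ι.injective (hτ a), hw⟩, rfl⟩
  · rintro ⟨w, hw, rfl⟩
    obtain ⟨ρ, hρ, hw⟩ := mem_outcomes.1 hw
    exact ⟨ι ∘ ρ, fun a => congrArg ι (hρ a), ρ, rfl, w, hw, rfl⟩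

theorem exists_comp_eq_of_mem_available_map {ι : A ↪ B} {f : W → V} {σ : C → B}
    (hσ : σ ∈ (G.map ι f).available C) : ∃ ρ : C → A, ι ∘ ρ = σ := by
  obtain ⟨v, hv⟩ := hσ
  obtain ⟨_, hτ, hv⟩ := mem_outcomes.1 hv
  obtain ⟨ρ, rfl, -⟩ := mem_map.1 hv
  exact ⟨fun a => ρ a.1, funext hτ⟩

theorem comp_mem_available_map {ι : A ↪ B} {f : W → V} {σ : C → A} :
    ι ∘ σ ∈ (G.map ι f).available C ↔ σ ∈ G.available C := by
  simp only [available, Set.mem_ofPred_eq, outcomes_map, Set.image_nonempty]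

theorem available_map (ι : A ↪ B) (f : W → V) :
    (G.map ι f).available C = (fun σ : C → A => ι ∘ σ) '' G.available C := by
  ext σ
  constructor
  · intro hσ
    obtain ⟨ρ, rfl⟩ := exists_comp_eq_of_mem_available_map hσ
    exact ⟨ρ, comp_mem_available_map.1 hσ, rfl⟩
  · rintro ⟨ρ, hρ, rfl⟩
    exact comp_mem_available_map.2 hρ

theorem Obeys.map {X : Set P3} (hG : G.Obeys X) (ι : A ↪ B) (f : W → V) :
    (G.map ι f).Obeys X where
  serial hS C := by
    rw [available_map]
    exact (hG.serial hS C).image _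
  independent hI C D hCD := by
    simp only [available_map, Set.forall_mem_image]
    intro σC hσC σD hσD
    exact ⟨_, hG.independent hI C D hCD σC hσC σD hσD, comp_jaUnion ι σC σD⟩
  deterministic hD := by
    simp only [available_map, Set.forall_mem_image]
    intro σ hσ
    obtain ⟨w, hw⟩ := hG.deterministic hD σ hσ
    exact ⟨f w, by rw [outcomes_map, hw, Set.image_singleton]⟩

end GameForm

theorem Frame.outC_eq_outcomes (F : Frame Agent) (C : Set Agent) (s : F.State) (σ : C → F.Act) :
    F.outC C s σ = GameForm.outcomes (F.out s) C σ :=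
  rfl

theorem Frame.aja_eq_available (F : Frame Agent) (C : Set Agent) (s : F.State) :
    F.aja C s = GameForm.available (F.out s) C :=
  rfl

theorem Model.isX_iff_forall_obeys {X : Set P3} {M : Model Agent} :
    M.IsX X ↔ ∀ s, GameForm.Obeys (M.out s) X :=
  ⟨fun h s => ⟨fun hS => h.1 hS s, fun hI => h.2.1 hI s, fun hD => h.2.2 hD s⟩,
    fun h => ⟨fun hS s => (h s).serial hS, fun hI s => (h s).independent hI,
      fun hD s => (h s).deterministic hD⟩⟩

namespace Blueprint

variable (bp : Blueprint Agent)

/-- The blueprint as a game whose outcomes are the listed formulas. -/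
def game : GameForm Agent bp.Act (Formula Agent) := fun τ => bp.listAG fun a => τ a.1

theorem outcomes_game (C : Set Agent) (σ : C → bp.Act) :
    bp.game.outcomes C σ = bp.listC C σ := by
  ext χ
  simp only [GameForm.mem_outcomes, listC, Set.mem_iUnion, exists_prop]
  constructor
  · rintro ⟨τ, hτ, hχ⟩
    exact ⟨fun a => τ a.1, hτ, hχ⟩
  · rintro ⟨τ, hτ, hχ⟩
    exact ⟨fun a => τ ⟨a, Set.mem_univ a⟩, hτ, hχ⟩

theorem available_game (C : Set Agent) : bp.game.available C = bp.PJA C := by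
  simp only [GameForm.available, PJA, outcomes_game]

theorem Regular.obeys_game {X : Set P3} {bp : Blueprint Agent} (hbp : bp.Regular X) :
    bp.game.Obeys X where
  serial := by simpa only [available_game] using hbp.2.1
  independent := by simpa only [available_game] using hbp.2.2.1
  deterministic hD σ hσ := by
    rw [available_game] at hσ
    obtain ⟨χ, hχ⟩ := hbp.2.2.2 hD σ hσ
    exact ⟨χ, (GameForm.outcomes_univ σ).trans hχ⟩

end Blueprint

/-- A map of models that preserves labels and, up to renaming of actions, the game played at each
state; the analogue of the bounded morphisms of modal logic. -/
structure BoundedMorphism (N M : Model Agent) where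
  onState : N.State → M.State
  onAct : N.Act ↪ M.Act
  out_onState : ∀ r, M.out (onState r) = GameForm.map (N.out r) onAct onState
  lab_onState : ∀ r, M.lab (onState r) = N.lab r

namespace BoundedMorphism

variable {N M : Model Agent} (f : BoundedMorphism N M)

theorem sat_onState_iff {φ : Formula Agent} {r : N.State} :
    M.sat φ (f.onState r) ↔ N.sat φ r := by
  induction φ generalizing r with
  | top => exact Iff.rfl
  | atom n => simp only [Model.sat, f.lab_onState]
  | neg φ ih => simp only [Model.sat, ih]
  | and φ ψ ihφ ihψ => simp only [Model.sat, ihφ, ihψ]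
  | coal C φ ih =>
    simp only [Model.sat, Frame.aja_eq_available, Frame.outC_eq_outcomes, f.out_onState,
      GameForm.available_map, GameForm.outcomes_map, Set.exists_mem_image, Set.forall_mem_image,
      ih]

theorem obeys_onState {X : Set P3} (hN : N.IsX X) (r : N.State) :
    GameForm.Obeys (M.out (f.onState r)) X := by
  rw [f.out_onState]
  exact (Model.isX_iff_forall_obeys.1 hN r).map _ _

end BoundedMorphism

namespace Model

variable {X : Set P3}

section DisjointUnion

variable {I : Type} [Nonempty I] (N : I → Model Agent)

/-- The disjoint union of a family of models. The action sets are kept disjoint as well, and at a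
state of `N i` only the profiles of `N i` have outcomes. -/
def disjointUnion : Model Agent where
  State := Σ i, (N i).State
  state_nonempty := Nonempty.map (fun i => ⟨i, (N i).state_nonempty.some⟩) ‹Nonempty I›
  Act := Σ i, (N i).Act
  act_nonempty := Nonempty.map (fun i => ⟨i, (N i).act_nonempty.some⟩) ‹Nonempty I›
  out s := GameForm.map ((N s.1).out s.2)
    (Function.Embedding.sigmaMk (β := fun i => (N i).Act) s.1) fun r => ⟨s.1, r⟩
  lab s := (N s.1).lab s.2

/-- The inclusion of a summand in the disjoint union. -/
def disjointUnionIncl (i : I) : BoundedMorphism (N i) (disjointUnion N) where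
  onState r := ⟨i, r⟩
  onAct := Function.Embedding.sigmaMk (β := fun i => (N i).Act) i
  out_onState _ := rfl
  lab_onState _ := rfl

variable {N} in
theorem isX_disjointUnion (hN : ∀ i, (N i).IsX X) : (disjointUnion N).IsX X :=
  isX_iff_forall_obeys.2 fun s => (disjointUnionIncl N s.1).obeys_onState (hN s.1) s.2

end DisjointUnion

theorem exists_isX_forall_xSat_exists_sat {M₀ : Model Agent} (hM₀ : M₀.IsX X) :
    ∃ U : Model Agent, U.IsX X ∧ ∀ χ, XSat X χ → ∃ s, U.sat χ s := by
  have : Nonempty {χ : Formula Agent // XSat X χ} :=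
    ⟨.top, M₀, hM₀, M₀.state_nonempty.some, trivial⟩
  choose N hN s hs using fun χ : {χ : Formula Agent // XSat X χ} => χ.2
  exact ⟨disjointUnion N, isX_disjointUnion hN, fun χ hχ =>
    ⟨_, (disjointUnionIncl N ⟨χ, hχ⟩).sat_onState_iff.2 (hs ⟨χ, hχ⟩)⟩⟩

section AddRoot

variable {A : Type} {W : Type*} (M : Model Agent) (G : GameForm Agent A W)
  (p : W → M.State) (L : Set ℕ)

/-- The model `M` with a new state `none`, labelled `L`, at which the game `G` is played with new
actions, an outcome `w` of `G` leading to the state `p w` of `M`. -/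
def addRoot : Model Agent where
  State := Option M.State
  state_nonempty := ⟨none⟩
  Act := A ⊕ M.Act
  act_nonempty := M.act_nonempty.map Sum.inr
  out s := s.elim (G.map Function.Embedding.inl fun w => some (p w))
    fun r => GameForm.map (M.out r) Function.Embedding.inr some
  lab s := s.elim L M.lab

/-- The new state of `M.addRoot G p L`. -/
def root : (M.addRoot G p L).State := none

/-- The actions of `G` as actions of `M.addRoot G p L`. -/
def rootAct : A ↪ (M.addRoot G p L).Act := Function.Embedding.inl

/-- The inclusion of the original model in the model with a new root. -/
def addRootIncl : BoundedMorphism M (M.addRoot G p L) where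
  onState := some
  onAct := Function.Embedding.inr
  out_onState _ := rfl
  lab_onState _ := rfl

theorem lab_root : (M.addRoot G p L).lab (M.root G p L) = L := rfl

theorem out_root : (M.addRoot G p L).out (M.root G p L) =
    G.map (M.rootAct G p L) fun w => (M.addRootIncl G p L).onState (p w) :=
  rfl

variable {M G} in
theorem isX_addRoot (hM : M.IsX X) (hG : G.Obeys X) : (M.addRoot G p L).IsX X :=
  isX_iff_forall_obeys.2 <| Option.forall.2
    ⟨hG.map _ _, (addRootIncl M G p L).obeys_onState hM⟩

end AddRoot

end Model

theorem Blueprint.realizes_addRoot {X : Set P3} {bp : Blueprint Agent} {U : Model Agent}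
    {p : Formula Agent → U.State} {L : Set ℕ} {γ : Formula Agent} (hU : U.IsX X)
    (hp : ∀ C σ, ∀ χ ∈ bp.listC C σ, U.sat χ (p χ))
    (hγ : (U.addRoot bp.game p L).sat γ (U.root bp.game p L)) :
    Realizes X bp γ (U.addRoot bp.game p L) (U.root bp.game p L) := by
  have sat_of_conseq {C : Set Agent} {σ : C → bp.Act} {χ ψ : Formula Agent}
      (hχ : χ ∈ bp.listC C σ) (hχψ : XConseq X χ ψ) :
      (U.addRoot bp.game p L).sat ψ ((U.addRootIncl bp.game p L).onState (p χ)) :=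
    (U.addRootIncl bp.game p L).sat_onState_iff.2 (hχψ U hU (p χ) (hp C σ χ hχ))
  refine ⟨U.rootAct bp.game p L, fun C => ?_, hγ, fun C σ ψ hψ => ?_, fun C σ ψ hψ => ?_⟩
  · rw [Frame.aja_eq_available, Model.out_root, GameForm.available_map, available_game]
  · rw [Frame.outC_eq_outcomes, Model.out_root, GameForm.outcomes_map, outcomes_game,
      Set.forall_mem_image]
    exact fun χ hχ => sat_of_conseq hχ (hψ χ hχ)
  · obtain ⟨χ, hχ, hχψ⟩ := hψ
    rw [Frame.outC_eq_outcomes, Model.out_root, GameForm.outcomes_map, outcomes_game,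
      Set.exists_mem_image]
    exact ⟨χ, hχ, sat_of_conseq hχ hχψ⟩

/-- Propositional formulas: those without coalition modalities. -/
inductive IsPropositional : Formula Agent → Prop
  | top : IsPropositional .top
  | atom (n : ℕ) : IsPropositional (.atom n)
  | neg {φ : Formula Agent} : IsPropositional φ → IsPropositional φ.neg
  | and {φ ψ : Formula Agent} : IsPropositional φ → IsPropositional ψ → IsPropositional (φ.and ψ)

theorem IsElemConj.isPropositional {γ : Formula Agent} (hγ : IsElemConj γ) :
    IsPropositional γ := by
  induction hγ with
  | lit hφ =>
    cases hφ with
    | pos n => exact .atom n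
    | neg n => exact .neg (.atom n)
  | and _ _ ihφ ihψ => exact .and ihφ ihψ

theorem IsPropositional.sat_iff_of_lab_eq {γ : Formula Agent} (hγ : IsPropositional γ)
    {N M : Model Agent} {r : N.State} {s : M.State} (hlab : M.lab s = N.lab r) :
    M.sat γ s ↔ N.sat γ r := by
  induction hγ with
  | top => exact Iff.rfl
  | atom n => simp only [Model.sat, hlab]
  | neg _ ih => simp only [Model.sat, ih]
  | and _ _ ihφ ihψ => simp only [Model.sat, ihφ, ihψ]

theorem realizability_of_blueprints_general (X : Set P3) (bp : Blueprint Agent)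
    (hbp : bp.Regular X) (γ : Formula Agent) (hγ : IsPropositional γ) (hγsat : XSat X γ) :
    ∃ (M : Model Agent) (s₀ : M.State), M.IsX X ∧ Realizes X bp γ M s₀ := by
  obtain ⟨M₀, hM₀, r₀, hr₀⟩ := hγsat
  obtain ⟨U, hU, hsat⟩ := Model.exists_isX_forall_xSat_exists_sat hM₀
  have := U.state_nonempty
  choose! p hp using hsat
  refine ⟨U.addRoot bp.game p (M₀.lab r₀), U.root bp.game p _,
    Model.isX_addRoot _ _ hU hbp.obeys_game,
    Blueprint.realizes_addRoot hU (fun C σ χ hχ => hp χ (hbp.1 C σ χ hχ)) ?_⟩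
  exact (hγ.sat_iff_of_lab_eq (Model.lab_root ..)).2 hr₀

end

/-- Realizability of blueprints: for every X ∈ ES, every X-regular blueprint
and every X-satisfiable elementary conjunction γ, there is a pointed X-model
realizing them. -/
theorem realizability_of_blueprints {Agent : Type} [Fintype Agent] (X : Set P3)
    (bp : Blueprint Agent) (hbp : bp.Regular X)
    (γ : Formula Agent) (hγ : IsElemConj γ) (hγsat : XSat X γ) :
    ∃ (M : Model Agent) (s₀ : M.State), M.IsX X ∧ Realizes X bp γ M s₀ :=
  realizability_of_blueprints_general X bp hbp γ hγ.isPropositional hγsat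

end CL
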